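/- arXiv:2510.23991 — 2 statements merged into one kernel-verified Lean document; each statement's English description precedes it below -/
import Mathlib

section
/- For subspaces R ⊆ L_i sampled as follows — R ∈ Grass(n, 2(1−δ)ℓ) uniform, and L_1,…,L_k ∈ Grass(n,2ℓ) uniform and independent conditioned on L_i ⊇ R — the probability that L_i ∩ L_j = R for all i ≠ j is at least 1 − k^2 · 2^{4ℓ − n} (in particular at least 1/2 when n ≥ 4ℓ + 2 log k + 1). -/
lemma aux_functional {V : Type*} [AddCommGroup V] [Module (ZMod 2) V]
    (R : Submodule (ZMod 2) V) (v w : V) (hv : v ∉ R) (hw : w ∉ R) :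
    ∃ f : V →ₗ[ZMod 2] ZMod 2, (∀ x ∈ R, f x = 0) ∧ f v = 1 ∧ f w = 1 := by
  have h01 : ∀ a : ZMod 2, a ≠ 0 → a = 1 := by decide
  obtain ⟨f, hf, hfR⟩ := Submodule.exists_le_ker_of_notMem hv
  obtain ⟨g, hg, hgR⟩ := Submodule.exists_le_ker_of_notMem hw
  have hf1 := h01 _ hf
  have hg1 := h01 _ hg
  by_cases hfw : f w = 0
  · by_cases hgv : g v = 0
    · refine ⟨f + g, fun x hx => ?_, ?_, ?_⟩
      · have h1 : f x = 0 := hfR hx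
        have h2 : g x = 0 := hgR hx
        simp [h1, h2]
      · simp [hf1, hgv]
      · simp [hg1, hfw]
    · exact ⟨g, fun x hx => hgR hx, h01 _ hgv, hg1⟩
  · exact ⟨f, fun x hx => hfR hx, hf1, h01 _ hfw⟩

lemma aux_equiv {V : Type*} [AddCommGroup V] [Module (ZMod 2) V]
    (R : Submodule (ZMod 2) V) (v w : V) (hv : v ∉ R) (hw : w ∉ R) :
    ∃ e : V ≃ₗ[ZMod 2] V, (∀ x ∈ R, e x = x) ∧ e v = w := by
  obtain ⟨f, hR, h1, h2⟩ := aux_functional R v w hv hw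
  have hd : f (w - v) = 0 := by simp [h1, h2]
  let T : V →ₗ[ZMod 2] V := LinearMap.id + f.smulRight (w - v)
  have hT : ∀ x, T x = x + f x • (w - v) := fun x => by simp [T]
  have h2' : ∀ a : ZMod 2, a + a = 0 := by decide
  have hTT : ∀ x, T (T x) = x := by
    intro x
    rw [hT (T x), hT x, map_add, map_smul, hd, smul_zero, add_zero, add_assoc, ← add_smul, h2',
      zero_smul, add_zero]
  refine ⟨LinearEquiv.ofLinearMap T T (LinearMap.ext hTT) (LinearMap.ext hTT), fun x hx => ?_, ?_⟩
  · simp [hT, hR x hx]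
  · simp [hT, h1]

/-- the extensions of `R` of dimension `d` -/
abbrev GExt {n : ℕ} (R : Submodule (ZMod 2) (Fin n → ZMod 2)) (d : ℕ) : Type :=
  {L : Submodule (ZMod 2) (Fin n → ZMod 2) // Module.finrank (ZMod 2) L = d ∧ R ≤ L}

lemma aux_card_mem {n : ℕ} (R : Submodule (ZMod 2) (Fin n → ZMod 2)) (d : ℕ)
    (v w : Fin n → ZMod 2) (hv : v ∉ R) (hw : w ∉ R) :
    Nat.card {L : GExt R d // v ∈ L.1} ≤ Nat.card {L : GExt R d // w ∈ L.1} := by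
  obtain ⟨e, he, hvw⟩ := aux_equiv R v w hv hw
  refine Nat.card_le_card_of_injective
    (fun L => ⟨⟨L.1.1.map e.toLinearMap, ?_, ?_⟩, ?_⟩) ?_
  · have := LinearEquiv.finrank_map_eq e L.1.1
    exact this.trans L.1.2.1
  · intro x hx
    exact ⟨x, L.1.2.2 hx, he x hx⟩
  · exact ⟨v, L.2, hvw⟩
  · intro L L' h
    have h' := congrArg (fun x : {L : GExt R d // w ∈ L.1} => x.1.1) h
    exact Subtype.ext (Subtype.ext (Submodule.map_injective_of_injective e.injective h'))

lemma aux_card_diff {n : ℕ} (R L : Submodule (ZMod 2) (Fin n → ZMod 2)) (h : R ≤ L) :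
    Nat.card {v : Fin n → ZMod 2 // v ∉ R ∧ v ∈ L} + 2 ^ Module.finrank (ZMod 2) R
      = 2 ^ Module.finrank (ZMod 2) L := by
  classical
  have key : ∀ M : Submodule (ZMod 2) (Fin n → ZMod 2),
      Nat.card {v // v ∈ M} = 2 ^ Module.finrank (ZMod 2) M := by
    intro M
    have := Module.natCard_eq_pow_finrank (K := ZMod 2) (V := M)
    simpa using this
  rw [← key, ← key]
  simp only [Nat.card_eq_fintype_card, Fintype.card_subtype]
  rw [← Finset.card_union_of_disjoint]
  · congr 1
    ext v
    simp only [Finset.mem_union, Finset.mem_filter, Finset.mem_univ, true_and]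
    have := @h v
    tauto
  · rw [Finset.disjoint_left]
    intro v
    simp +contextual

lemma aux_pairs {n : ℕ} (R : Submodule (ZMod 2) (Fin n → ZMod 2)) (d : ℕ) (hd : d ≤ n) :
    Nat.card {p : GExt R d × GExt R d // p.1.1 ⊓ p.2.1 ≠ R} * 2 ^ n
      ≤ Nat.card (GExt R d) ^ 2 * 2 ^ (2 * d) := by
  classical
  set N := Nat.card (GExt R d) with hN
  obtain hE | ⟨⟨L0⟩⟩ := isEmpty_or_nonempty (GExt R d)
  · simp
  set r := Module.finrank (ZMod 2) R with hr
  have hrd : r ≤ d := by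
    rw [← L0.2.1]; exact Submodule.finrank_mono L0.2.2
  have hA : (2:ℕ) ^ r ≤ 2 ^ d := Nat.pow_le_pow_right (by norm_num) hrd
  have hB : (2:ℕ) ^ d ≤ 2 ^ n := Nat.pow_le_pow_right (by norm_num) hd
  -- size of the differences
  obtain ⟨m, hm⟩ : ∃ m, m + 2 ^ r = 2 ^ d := ⟨2 ^ d - 2 ^ r, by omega⟩
  obtain ⟨M, hM⟩ : ∃ M, M + 2 ^ r = 2 ^ n := ⟨2 ^ n - 2 ^ r, by omega⟩
  have hdiff : ∀ L : GExt R d, Nat.card {v : Fin n → ZMod 2 // v ∉ R ∧ v ∈ L.1} = m := by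
    intro L
    have := aux_card_diff R L.1 L.2.2
    rw [L.2.1, ← hr, ← hm] at this
    exact Nat.add_right_cancel this
  have htop : Nat.card {v : Fin n → ZMod 2 // v ∉ R} = M := by
    have := aux_card_diff R ⊤ le_top
    simp only [Submodule.mem_top, and_true, finrank_top, Module.finrank_fin_fun] at this
    rw [← hr, ← hM] at this
    exact Nat.add_right_cancel this
  -- bad pairs inject into triples
  let c : (Fin n → ZMod 2) → ℕ := fun v => Nat.card {L : GExt R d // v ∈ L.1}
  have hcc : ∀ v w, v ∉ R → w ∉ R → c v = c w := fun v w hv hw =>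
    le_antisymm (aux_card_mem R d v w hv hw) (aux_card_mem R d w v hw hv)
  have hsum : ∑ v : {v : Fin n → ZMod 2 // v ∉ R}, c v.1 = N * m := by
    have e : (Σ v : {v : Fin n → ZMod 2 // v ∉ R}, {L : GExt R d // v.1 ∈ L.1}) ≃
        (Σ L : GExt R d, {v : Fin n → ZMod 2 // v ∉ R ∧ v ∈ L.1}) :=
      { toFun := fun x => ⟨x.2.1, x.1.1, x.1.2, x.2.2⟩
        invFun := fun x => ⟨⟨x.2.1, x.2.2.1⟩, x.1, x.2.2.2⟩
        left_inv := fun _ => rfl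
        right_inv := fun _ => rfl }
    have h := Nat.card_congr e
    rw [Nat.card_sigma, Nat.card_sigma] at h
    rw [show ∑ v : {v : Fin n → ZMod 2 // v ∉ R}, c v.1 = _ from h]
    simp only [hdiff, Finset.sum_const, Finset.card_univ, smul_eq_mul, hN,
      Nat.card_eq_fintype_card]
  have hbad : Nat.card {p : GExt R d × GExt R d // p.1.1 ⊓ p.2.1 ≠ R} ≤
      ∑ v : {v : Fin n → ZMod 2 // v ∉ R}, c v.1 * c v.1 := by
    have hex : ∀ p : {p : GExt R d × GExt R d // p.1.1 ⊓ p.2.1 ≠ R},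
        ∃ v, v ∉ R ∧ v ∈ p.1.1.1 ∧ v ∈ p.1.2.1 := by
      intro p
      by_contra hcon
      push Not at hcon
      apply p.2
      apply le_antisymm
      · intro x hx
        by_contra hxR
        exact hcon x hxR hx.1 hx.2
      · exact le_inf p.1.1.2.2 p.1.2.2.2
    choose v hv1 hv2 hv3 using hex
    have := Nat.card_le_card_of_injective
      (β := Σ v : {v : Fin n → ZMod 2 // v ∉ R},
        {L : GExt R d // v.1 ∈ L.1} × {L : GExt R d // v.1 ∈ L.1})
      (fun p : {p : GExt R d × GExt R d // p.1.1 ⊓ p.2.1 ≠ R} =>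
        ⟨⟨v p, hv1 p⟩, ⟨p.1.1, hv2 p⟩, ⟨p.1.2, hv3 p⟩⟩) (by
        intro p q h
        have h1 := congrArg (fun x : (Σ v : {v : Fin n → ZMod 2 // v ∉ R},
          {L : GExt R d // v.1 ∈ L.1} × {L : GExt R d // v.1 ∈ L.1}) => (x.2.1.1, x.2.2.1)) h
        exact Subtype.ext h1)
    rw [Nat.card_sigma] at this
    simpa only [Nat.card_prod] using this
  have hMb : Nat.card {p : GExt R d × GExt R d // p.1.1 ⊓ p.2.1 ≠ R} * M ≤ N ^ 2 * m ^ 2 := by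
    by_cases hM0 : M = 0
    · simp [hM0]
    · have : Nonempty {v : Fin n → ZMod 2 // v ∉ R} := by
        by_contra hne
        rw [not_nonempty_iff] at hne
        apply hM0
        rw [← htop]; simp
      obtain ⟨v0⟩ := this
      have hc0 : ∀ v : {v : Fin n → ZMod 2 // v ∉ R}, c v.1 = c v0.1 :=
        fun v => hcc _ _ v.2 v0.2
      simp only [hc0, Finset.sum_const, Finset.card_univ, smul_eq_mul,
        ← Nat.card_eq_fintype_card, htop] at hsum hbad
      calc _ ≤ (M * (c v0.1 * c v0.1)) * M := Nat.mul_le_mul_right _ hbad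
        _ = (M * c v0.1) ^ 2 := by ring
        _ = _ := by rw [hsum]; ring
  have hm0 : m = 0 → Nat.card {p : GExt R d × GExt R d // p.1.1 ⊓ p.2.1 ≠ R} = 0 := by
    intro h0
    rw [h0, mul_zero] at hsum
    have hz : ∀ v : {v : Fin n → ZMod 2 // v ∉ R}, c v.1 = 0 := by
      intro v
      exact (Finset.sum_eq_zero_iff.1 hsum) v (Finset.mem_univ _)
    simpa [hz] using hbad
  generalize Nat.card {p : GExt R d × GExt R d // p.1.1 ⊓ p.2.1 ≠ R} = b at *
  rcases Nat.eq_zero_or_pos m with h0 | hmpos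
  · simp [hm0 h0]
  rw [pow_mul', ← hM, ← hm]
  generalize (2:ℕ) ^ r = q at *
  have hmM : m ≤ M := by omega
  have hMpos : 0 < M := by omega
  have h3 : m ^ 2 * (M + q) ≤ (m + q) ^ 2 * M := by
    nlinarith [Nat.mul_le_mul_left (m * q) hmM, Nat.zero_le (m * q * M), Nat.zero_le (q * q * M)]
  refine Nat.le_of_mul_le_mul_right ?_ hMpos
  calc b * (M + q) * M = (b * M) * (M + q) := by ring
    _ ≤ (N ^ 2 * m ^ 2) * (M + q) := Nat.mul_le_mul_right _ hMb
    _ = N ^ 2 * (m ^ 2 * (M + q)) := by ring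
    _ ≤ N ^ 2 * ((m + q) ^ 2 * M) := Nat.mul_le_mul_left _ h3
    _ = _ := by ring

lemma aux_tuple {α : Type*} [Finite α] {k : ℕ} (i j : Fin k) (hij : i ≠ j)
    (P : α × α → Prop) :
    Nat.card {f : Fin k → α // P (f i, f j)} * Nat.card α ^ 2
      ≤ Nat.card α ^ k * Nat.card {p : α × α // P p} := by
  classical
  have := Nat.card_le_card_of_injective
    (α := {f : Fin k → α // P (f i, f j)} × (α × α))
    (β := (Fin k → α) × {p : α × α // P p})
    (fun x => (Function.update (Function.update x.1.1 i x.2.1) j x.2.2,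
      ⟨(x.1.1 i, x.1.1 j), x.1.2⟩)) (by
      rintro ⟨⟨f, hf⟩, a, b⟩ ⟨⟨g, hg⟩, a', b'⟩ h
      simp only [Prod.mk.injEq, Subtype.mk.injEq] at h ⊢
      obtain ⟨h1, h2, h3⟩ := h
      refine ⟨?_, ?_, ?_⟩
      · funext x
        by_cases hxj : x = j
        · rw [hxj, h3]
        by_cases hxi : x = i
        · rw [hxi, h2]
        simpa [hxi, hxj] using congrFun h1 x
      · simpa [hij] using congrFun h1 i
      · simpa using congrFun h1 j)
  simpa [Nat.card_prod, Nat.card_fun, sq] using this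

lemma aux_good {n k : ℕ} (R : Submodule (ZMod 2) (Fin n → ZMod 2)) (d : ℕ) (hd : d ≤ n) :
    ((1 : ℚ) - (k : ℚ) ^ 2 * 2 ^ (2 * d) / 2 ^ n) * Nat.card (Fin k → GExt R d) ≤
      Nat.card {f : Fin k → GExt R d // ∀ i j, i ≠ j → (f i).1 ⊓ (f j).1 = R} := by
  classical
  obtain hE | hne := isEmpty_or_nonempty (GExt R d)
  · rcases Nat.eq_zero_or_pos k with rfl | hk
    · simp
    · have : Nonempty (Fin k) := ⟨⟨0, hk⟩⟩
      simp
  have hNpos : 0 < Nat.card (GExt R d) := Nat.card_pos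
  have hpair : ∀ i j : Fin k, i ≠ j →
      (Nat.card {f : Fin k → GExt R d // (f i).1 ⊓ (f j).1 ≠ R} : ℚ) ≤
        2 ^ (2 * d) / 2 ^ n * Nat.card (Fin k → GExt R d) := by
    intro i j hij
    have h1 := aux_tuple (α := GExt R d) i j hij (fun p => p.1.1 ⊓ p.2.1 ≠ R)
    have h2 := aux_pairs R d hd
    simp only at h1
    rw [Nat.card_fun, Nat.card_fin]
    generalize Nat.card {f : Fin k → GExt R d // (f i).1 ⊓ (f j).1 ≠ R} = a at *
    generalize Nat.card {p : GExt R d × GExt R d // p.1.1 ⊓ p.2.1 ≠ R} = b at *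
    generalize Nat.card (GExt R d) = N at *
    have h3 : a * 2 ^ n ≤ N ^ k * 2 ^ (2 * d) := by
      refine Nat.le_of_mul_le_mul_right ?_ (pow_pos hNpos 2)
      calc a * 2 ^ n * N ^ 2 = (a * N ^ 2) * 2 ^ n := by ring
        _ ≤ (N ^ k * b) * 2 ^ n := Nat.mul_le_mul_right _ h1
        _ = N ^ k * (b * 2 ^ n) := by ring
        _ ≤ N ^ k * (N ^ 2 * 2 ^ (2 * d)) := Nat.mul_le_mul_left _ h2
        _ = _ := by ring
    have h4 : (a : ℚ) * 2 ^ n ≤ N ^ k * 2 ^ (2 * d) := by exact_mod_cast h3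
    rw [div_mul_eq_mul_div, le_div_iff₀ (by positivity)]
    push_cast
    linarith
  have hcover : Nat.card (Fin k → GExt R d) ≤
      Nat.card {f : Fin k → GExt R d // ∀ i j, i ≠ j → (f i).1 ⊓ (f j).1 = R} +
      ∑ p ∈ (Finset.univ : Finset (Fin k × Fin k)).filter (fun p => p.1 ≠ p.2),
        Nat.card {f : Fin k → GExt R d // (f p.1).1 ⊓ (f p.2).1 ≠ R} := by
    have : Fintype (GExt R d) := Fintype.ofFinite _
    simp only [Nat.card_eq_fintype_card, Fintype.card_subtype]
    refine le_trans ?_ (Nat.add_le_add_left Finset.card_biUnion_le _)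
    refine le_trans ?_ (Finset.card_union_le _ _)
    rw [← Finset.card_univ]
    apply Finset.card_le_card
    intro f _
    by_cases hf : ∀ i j, i ≠ j → (f i).1 ⊓ (f j).1 = R
    · apply Finset.mem_union_left
      simpa using hf
    · apply Finset.mem_union_right
      push Not at hf
      obtain ⟨i, j, hij, hb⟩ := hf
      simp only [Finset.mem_biUnion, Finset.mem_filter, Finset.mem_univ, true_and]
      exact ⟨(i, j), hij, hb⟩
  have hcoverQ : (Nat.card (Fin k → GExt R d) : ℚ) ≤
      Nat.card {f : Fin k → GExt R d // ∀ i j, i ≠ j → (f i).1 ⊓ (f j).1 = R} +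
      ∑ p ∈ (Finset.univ : Finset (Fin k × Fin k)).filter (fun p => p.1 ≠ p.2),
        (Nat.card {f : Fin k → GExt R d // (f p.1).1 ⊓ (f p.2).1 ≠ R} : ℚ) := by
    exact_mod_cast hcover
  have hs : ∑ p ∈ (Finset.univ : Finset (Fin k × Fin k)).filter (fun p => p.1 ≠ p.2),
        (Nat.card {f : Fin k → GExt R d // (f p.1).1 ⊓ (f p.2).1 ≠ R} : ℚ) ≤
      (k : ℚ) ^ 2 * (2 ^ (2 * d) / 2 ^ n * Nat.card (Fin k → GExt R d)) := by
    refine (Finset.sum_le_card_nsmul _ _ _ fun p hp => hpair p.1 p.2 ?_).trans ?_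
    · simpa using hp
    · rw [nsmul_eq_mul]
      refine mul_le_mul_of_nonneg_right ?_ (by positivity)
      have : ((Finset.univ : Finset (Fin k × Fin k)).filter (fun p => p.1 ≠ p.2)).card ≤ k ^ 2 := by
        refine (Finset.card_filter_le _ _).trans ?_
        simp [sq]
      exact_mod_cast this
  have : (k : ℚ) ^ 2 * 2 ^ (2 * d) / 2 ^ n * Nat.card (Fin k → GExt R d)
      = (k : ℚ) ^ 2 * (2 ^ (2 * d) / 2 ^ n * Nat.card (Fin k → GExt R d)) := by ring
  linarith

lemma aux_exists {n r d : ℕ} (hrd : r ≤ d) (hd : d ≤ n) :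
    ∃ R L : Submodule (ZMod 2) (Fin n → ZMod 2), Module.finrank (ZMod 2) R = r ∧
      Module.finrank (ZMod 2) L = d ∧ R ≤ L := by
  classical
  have key : ∀ s : ℕ, s ≤ n → Module.finrank (ZMod 2)
      (Submodule.span (ZMod 2) (Set.range fun i : {i : Fin n // i.1 < s} =>
        Pi.basisFun (ZMod 2) (Fin n) i.1)) = s := by
    intro s hs
    have h := finrank_span_eq_card ((Pi.basisFun (ZMod 2) (Fin n)).linearIndependent.comp
      (fun i : {i : Fin n // i.1 < s} => i.1) Subtype.val_injective)
    rw [Fintype.card_subtype, Fin.card_filter_val_lt, min_eq_right hs] at h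
    exact h
  refine ⟨_, _, key r (hrd.trans hd), key d hd, Submodule.span_mono ?_⟩
  rintro _ ⟨i, rfl⟩
  exact ⟨⟨i.1, lt_of_lt_of_le i.2 hrd⟩, rfl⟩

theorem stmt_13 (n ℓ t k : ℕ) (ht : t ≤ 2 * ℓ) (hn : 2 * ℓ ≤ n) :
    (1 : ℚ) - (k : ℚ) ^ 2 * 2 ^ (4 * ℓ) / 2 ^ n ≤
      (Nat.card {p : Submodule (ZMod 2) (Fin n → ZMod 2) ×
            (Fin k → Submodule (ZMod 2) (Fin n → ZMod 2)) //
          (Module.finrank (ZMod 2) p.1 = 2 * ℓ - t ∧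
            ∀ i, Module.finrank (ZMod 2) (p.2 i) = 2 * ℓ ∧ p.1 ≤ p.2 i) ∧
          ∀ i j, i ≠ j → p.2 i ⊓ p.2 j = p.1} : ℚ) /
        (Nat.card {p : Submodule (ZMod 2) (Fin n → ZMod 2) ×
            (Fin k → Submodule (ZMod 2) (Fin n → ZMod 2)) //
          Module.finrank (ZMod 2) p.1 = 2 * ℓ - t ∧
            ∀ i, Module.finrank (ZMod 2) (p.2 i) = 2 * ℓ ∧ p.1 ≤ p.2 i} : ℚ) := by
  classical
  have hpos : 0 < Nat.card {p : Submodule (ZMod 2) (Fin n → ZMod 2) ×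
            (Fin k → Submodule (ZMod 2) (Fin n → ZMod 2)) //
          Module.finrank (ZMod 2) p.1 = 2 * ℓ - t ∧
            ∀ i, Module.finrank (ZMod 2) (p.2 i) = 2 * ℓ ∧ p.1 ≤ p.2 i} := by
    obtain ⟨R, L, h1, h2, h3⟩ := aux_exists (Nat.sub_le (2 * ℓ) t) hn
    have : Nonempty {p : Submodule (ZMod 2) (Fin n → ZMod 2) ×
            (Fin k → Submodule (ZMod 2) (Fin n → ZMod 2)) //
          Module.finrank (ZMod 2) p.1 = 2 * ℓ - t ∧
            ∀ i, Module.finrank (ZMod 2) (p.2 i) = 2 * ℓ ∧ p.1 ≤ p.2 i} :=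
      ⟨⟨(R, fun _ => L), h1, fun _ => ⟨h2, h3⟩⟩⟩
    exact Nat.card_pos
  rw [le_div_iff₀ (by exact_mod_cast hpos)]
  let S := {R : Submodule (ZMod 2) (Fin n → ZMod 2) // Module.finrank (ZMod 2) R = 2 * ℓ - t}
  have : Fintype S := Fintype.ofFinite _
  let e1 : {p : Submodule (ZMod 2) (Fin n → ZMod 2) ×
            (Fin k → Submodule (ZMod 2) (Fin n → ZMod 2)) //
          Module.finrank (ZMod 2) p.1 = 2 * ℓ - t ∧
            ∀ i, Module.finrank (ZMod 2) (p.2 i) = 2 * ℓ ∧ p.1 ≤ p.2 i} ≃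
      (Σ R : S, (Fin k → GExt R.1 (2 * ℓ))) :=
    { toFun := fun p => ⟨⟨p.1.1, p.2.1⟩, fun i => ⟨p.1.2 i, p.2.2 i⟩⟩
      invFun := fun x => ⟨(x.1.1, fun i => (x.2 i).1), x.1.2, fun i => (x.2 i).2⟩
      left_inv := fun _ => rfl
      right_inv := fun _ => rfl }
  let e2 : {p : Submodule (ZMod 2) (Fin n → ZMod 2) ×
            (Fin k → Submodule (ZMod 2) (Fin n → ZMod 2)) //
          (Module.finrank (ZMod 2) p.1 = 2 * ℓ - t ∧
            ∀ i, Module.finrank (ZMod 2) (p.2 i) = 2 * ℓ ∧ p.1 ≤ p.2 i) ∧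
          ∀ i j, i ≠ j → p.2 i ⊓ p.2 j = p.1} ≃
      (Σ R : S, {f : Fin k → GExt R.1 (2 * ℓ) // ∀ i j, i ≠ j → (f i).1 ⊓ (f j).1 = R.1}) :=
    { toFun := fun p => ⟨⟨p.1.1, p.2.1.1⟩, ⟨fun i => ⟨p.1.2 i, p.2.1.2 i⟩, p.2.2⟩⟩
      invFun := fun x => ⟨(x.1.1, fun i => (x.2.1 i).1), ⟨x.1.2, fun i => (x.2.1 i).2⟩, x.2.2⟩
      left_inv := fun _ => rfl
      right_inv := fun _ => rfl }
  rw [Nat.card_congr e1, Nat.card_congr e2, Nat.card_sigma, Nat.card_sigma, Nat.cast_sum,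
    Nat.cast_sum, Finset.mul_sum]
  refine Finset.sum_le_sum fun R _ => ?_
  have := aux_good (k := k) R.1 (2 * ℓ) hn
  rwa [← mul_assoc] at this
end

section
/- The inner product expression dominates the subspace event: with F, G the matrix-indicator functions of subspace families 𝓛 ⊆ Grass(n,2ℓ) and 𝓡 ⊆ Grass(n,2(1−δ)ℓ), and T the column-extension averaging operator, we have Pr[R ∈ 𝓡 and L_1,…,L_k ∈ 𝓛] ≤ 2⟨(TF)^k, G⟩, provided n ≥ 2ℓ + log(2(2ℓ + 2δkℓ)). -/
open Classical in
lemma snoc_count (n m d : ℕ) (L : Submodule (ZMod 2) (Fin n → ZMod 2))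
    (hL : Module.finrank (ZMod 2) L = d) (M : Fin m → Fin n → ZMod 2)
    (hM : LinearIndependent (ZMod 2) M) (hML : ∀ i, M i ∈ L) :
    ∑ x : Fin n → ZMod 2,
      (if x ∈ L ∧ x ∉ Submodule.span (ZMod 2) (Set.range M) then (1:ℝ) else 0)
      = 2 ^ d - 2 ^ m := by
  have hc : ∀ W : Submodule (ZMod 2) (Fin n → ZMod 2),
      ∑ x : Fin n → ZMod 2, (if x ∈ W then (1:ℝ) else 0)
        = 2 ^ (Module.finrank (ZMod 2) W) := by
    intro W
    have h := Module.card_eq_pow_finrank (K := ZMod 2) (V := W)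
    rw [ZMod.card] at h
    rw [Finset.sum_boole, ← Fintype.card_subtype]
    have h2 : Fintype.card {x // x ∈ W} = 2 ^ (Module.finrank (ZMod 2) W) := by
      rw [← h]
    exact_mod_cast h2
  have hs : Submodule.span (ZMod 2) (Set.range M) ≤ L := by
    rw [Submodule.span_le]
    rintro _ ⟨i, rfl⟩
    exact hML i
  have e1 := hc L
  have e2 := hc (Submodule.span (ZMod 2) (Set.range M))
  rw [finrank_span_eq_card hM, Fintype.card_fin] at e2
  rw [hL] at e1
  rw [← e1, ← e2, ← Finset.sum_sub_distrib]
  refine Finset.sum_congr rfl fun x _ => ?_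
  by_cases h2 : x ∈ Submodule.span (ZMod 2) (Set.range M)
  · have h1 : x ∈ L := hs h2
    simp [h1, h2]
  · by_cases h1 : x ∈ L <;> simp [h1, h2]

open Classical in
lemma ext_count (n a d : ℕ) (L : Submodule (ZMod 2) (Fin n → ZMod 2))
    (hL : Module.finrank (ZMod 2) L = d) (M : Fin a → Fin n → ZMod 2)
    (hM : LinearIndependent (ZMod 2) M) (hML : ∀ i, M i ∈ L) (b : ℕ) :
    ∑ v : Fin b → Fin n → ZMod 2,
      (if (∀ i, v i ∈ L) ∧ LinearIndependent (ZMod 2) (Fin.append M v) then (1:ℝ) else 0)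
      = ∏ i ∈ Finset.range b, ((2:ℝ) ^ d - 2 ^ (a + i)) := by
  induction b with
  | zero =>
    have h : ∀ v : Fin 0 → Fin n → ZMod 2,
        LinearIndependent (ZMod 2) (Fin.append M v) := by
      intro v
      have : Fin.append M v = M := by
        rw [Fin.append_right_nil _ _ rfl]; rfl
      rw [this]; exact hM
    simp [h]
  | succ b ih =>
    rw [Finset.prod_range_succ, ← ih, Finset.sum_mul,
      ← (Fin.snocEquiv (fun _ : Fin (b+1) => Fin n → ZMod 2)).sum_comp,
      Fintype.sum_prod_type, Finset.sum_comm]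
    refine Finset.sum_congr rfl fun v _ => ?_
    have key : ∀ x : Fin n → ZMod 2,
        ((∀ i, (Fin.snocEquiv (fun _ : Fin (b+1) => Fin n → ZMod 2)) (x, v) i ∈ L) ∧
          LinearIndependent (ZMod 2) (Fin.append M
            ((Fin.snocEquiv (fun _ : Fin (b+1) => Fin n → ZMod 2)) (x, v)))) ↔
        (((∀ i, v i ∈ L) ∧ LinearIndependent (ZMod 2) (Fin.append M v)) ∧
          (x ∈ L ∧ x ∉ Submodule.span (ZMod 2) (Set.range (Fin.append M v)))) := by
      intro x
      have e : (Fin.snocEquiv (fun _ : Fin (b+1) => Fin n → ZMod 2)) (x, v)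
        = (Fin.snoc v x : Fin (b+1) → Fin n → ZMod 2) := rfl
      rw [e, Fin.append_snoc]
      have := linearIndependent_finSnoc (K := ZMod 2) (x := x) (v := Fin.append M v)
      rw [show LinearIndependent (ZMod 2) (Fin.snoc (Fin.append M v) x : Fin (a + (b+1)) → Fin n → ZMod 2) ↔ _ from this]
      rw [Fin.forall_fin_succ']
      simp only [Fin.snoc_castSucc, Fin.snoc_last]
      tauto
    simp only [key]
    by_cases hv : (∀ i, v i ∈ L) ∧ LinearIndependent (ZMod 2) (Fin.append M v)
    · rw [if_pos hv, one_mul]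
      simp only [hv, true_and]
      rw [← snoc_count n (a + b) d L hL (Fin.append M v) hv.2]
      · simp
      · intro i
        refine Fin.addCases (fun j => ?_) (fun j => ?_) i
        · rw [Fin.append_left]; exact hML j
        · rw [Fin.append_right]; exact hv.1 j
    · rw [if_neg hv, zero_mul]
      refine Finset.sum_eq_zero fun x _ => ?_
      rw [if_neg]
      exact fun h => hv h.1

open Classical in
lemma base_count (n a d : ℕ) (L : Submodule (ZMod 2) (Fin n → ZMod 2))
    (hL : Module.finrank (ZMod 2) L = d) :
    ∑ v : Fin a → Fin n → ZMod 2,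
      (if (∀ i, v i ∈ L) ∧ LinearIndependent (ZMod 2) v then (1:ℝ) else 0)
      = ∏ i ∈ Finset.range a, ((2:ℝ) ^ d - 2 ^ i) := by
  have h := ext_count n 0 d L hL (fun i => i.elim0) (linearIndependent_empty_type)
    (fun i => i.elim0) a
  simp only [Nat.zero_add] at h
  rw [← h]
  refine Finset.sum_congr rfl fun v _ => ?_
  have e : LinearIndependent (ZMod 2) (Fin.append (fun i : Fin 0 => i.elim0) v) ↔
      LinearIndependent (ZMod 2) v := by
    rw [Fin.append_left_nil _ _ rfl]
    exact linearIndependent_equiv (finCongr (Nat.zero_add a))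
  simp only [e]

/-- number of members of the family of dimension `m` above `R` -/
noncomputable def upCount (n m : ℕ) (𝓛 : Submodule (ZMod 2) (Fin n → ZMod 2) → Prop)
    (R : Submodule (ZMod 2) (Fin n → ZMod 2)) : ℕ :=
  Nat.card {L : Submodule (ZMod 2) (Fin n → ZMod 2) //
    (Module.finrank (ZMod 2) L = m ∧ R ≤ L) ∧ 𝓛 L}

lemma span_eq_iff (n m : ℕ) (M : Fin m → Fin n → ZMod 2)
    (hM : LinearIndependent (ZMod 2) M) (L : Submodule (ZMod 2) (Fin n → ZMod 2)) :
    Submodule.span (ZMod 2) (Set.range M) = L ↔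
      Module.finrank (ZMod 2) L = m ∧ ∀ i, M i ∈ L := by
  constructor
  · rintro rfl
    refine ⟨by rw [finrank_span_eq_card hM, Fintype.card_fin], fun i => ?_⟩
    exact Submodule.subset_span ⟨i, rfl⟩
  · rintro ⟨h1, h2⟩
    apply Submodule.eq_of_le_of_finrank_eq
    · rw [Submodule.span_le]
      rintro _ ⟨i, rfl⟩
      exact h2 i
    · rw [finrank_span_eq_card hM, Fintype.card_fin, h1]

open Classical in
lemma inner_count (n a b : ℕ) (𝓛 : Submodule (ZMod 2) (Fin n → ZMod 2) → Prop)
    (M : Fin a → Fin n → ZMod 2) (hM : LinearIndependent (ZMod 2) M) :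
    ∑ v : Fin b → Fin n → ZMod 2,
      (if LinearIndependent (ZMod 2) (Fin.append M v) ∧
        𝓛 (Submodule.span (ZMod 2) (Set.range (Fin.append M v))) then (1:ℝ) else 0)
      = (∏ i ∈ Finset.range b, ((2:ℝ) ^ (a + b) - 2 ^ (a + i))) *
        upCount n (a + b) 𝓛 (Submodule.span (ZMod 2) (Set.range M)) := by
  haveI : Fintype (Submodule (ZMod 2) (Fin n → ZMod 2)) := Fintype.ofFinite _
  have hcnt : (upCount n (a + b) 𝓛 (Submodule.span (ZMod 2) (Set.range M)) : ℝ) =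
      ∑ L : Submodule (ZMod 2) (Fin n → ZMod 2),
        (if (Module.finrank (ZMod 2) L = a + b ∧
          Submodule.span (ZMod 2) (Set.range M) ≤ L) ∧ 𝓛 L then (1:ℝ) else 0) := by
    rw [upCount, Nat.card_eq_fintype_card, Fintype.card_subtype, Finset.sum_boole]
  rw [hcnt, Finset.mul_sum]
  have step : ∀ L : Submodule (ZMod 2) (Fin n → ZMod 2),
      (∏ i ∈ Finset.range b, ((2:ℝ) ^ (a + b) - 2 ^ (a + i))) *
        (if (Module.finrank (ZMod 2) L = a + b ∧
          Submodule.span (ZMod 2) (Set.range M) ≤ L) ∧ 𝓛 L then (1:ℝ) else 0)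
      = ∑ v : Fin b → Fin n → ZMod 2,
        (if Submodule.span (ZMod 2) (Set.range (Fin.append M v)) = L then
          (if LinearIndependent (ZMod 2) (Fin.append M v) ∧ 𝓛 L then (1:ℝ) else 0) else 0) := by
    intro L
    split_ifs with h
    · obtain ⟨⟨h1, h2⟩, h3⟩ := h
      have hML : ∀ i, M i ∈ L := fun i => h2 (Submodule.subset_span ⟨i, rfl⟩)
      rw [mul_one, ← ext_count n a (a + b) L h1 M hM hML b]
      refine Finset.sum_congr rfl fun v _ => ?_
      by_cases hv : LinearIndependent (ZMod 2) (Fin.append M v)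
      · have e := span_eq_iff n (a + b) _ hv L
        have e2 : (∀ i, Fin.append M v i ∈ L) ↔ ∀ i, v i ∈ L := by
          constructor
          · intro h i
            have := h (Fin.natAdd a i)
            rwa [Fin.append_right] at this
          · intro h i
            refine Fin.addCases (fun j => ?_) (fun j => ?_) i
            · rw [Fin.append_left]; exact hML j
            · rw [Fin.append_right]; exact h j
        simp only [e, e2, hv, h1, h3, true_and, and_true, if_true]
      · simp [hv]
    · rw [mul_zero]
      symm
      refine Finset.sum_eq_zero fun v _ => ?_
      split_ifs with h4 h5
      · exfalso
        apply h
        obtain ⟨h6, h7⟩ := (span_eq_iff n (a + b) _ h5.1 L).1 h4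
        refine ⟨⟨h6, ?_⟩, h5.2⟩
        rw [Submodule.span_le]
        rintro _ ⟨i, rfl⟩
        have := h7 (Fin.castAdd b i)
        rwa [Fin.append_left] at this
      · rfl
      · rfl
  simp only [step]
  rw [Finset.sum_comm]
  refine Finset.sum_congr rfl fun v _ => ?_
  rw [Finset.sum_ite_eq]
  simp

open Classical in
lemma outer_count (n a : ℕ) (𝓡 : Submodule (ZMod 2) (Fin n → ZMod 2) → Prop)
    [Fintype (Submodule (ZMod 2) (Fin n → ZMod 2))]
    (f : Submodule (ZMod 2) (Fin n → ZMod 2) → ℝ) :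
    ∑ M : Fin a → Fin n → ZMod 2,
      (if LinearIndependent (ZMod 2) M ∧ 𝓡 (Submodule.span (ZMod 2) (Set.range M))
        then f (Submodule.span (ZMod 2) (Set.range M)) else 0)
      = (∏ i ∈ Finset.range a, ((2:ℝ) ^ a - 2 ^ i)) *
        ∑ R : Submodule (ZMod 2) (Fin n → ZMod 2),
          (if Module.finrank (ZMod 2) R = a ∧ 𝓡 R then f R else 0) := by
  rw [Finset.mul_sum]
  have step : ∀ L : Submodule (ZMod 2) (Fin n → ZMod 2),
      (∏ i ∈ Finset.range a, ((2:ℝ) ^ a - 2 ^ i)) *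
        (if Module.finrank (ZMod 2) L = a ∧ 𝓡 L then f L else 0)
      = ∑ M : Fin a → Fin n → ZMod 2,
        (if Submodule.span (ZMod 2) (Set.range M) = L then
          (if LinearIndependent (ZMod 2) M ∧ 𝓡 L then f L else 0) else 0) := by
    intro L
    split_ifs with h
    · obtain ⟨h1, h3⟩ := h
      rw [← base_count n a a L h1, Finset.sum_mul]
      refine Finset.sum_congr rfl fun v _ => ?_
      by_cases hv : LinearIndependent (ZMod 2) v
      · have e := span_eq_iff n a _ hv L
        simp only [e, hv, h1, h3, true_and, and_true, if_true, ite_mul, one_mul, zero_mul]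
      · simp [hv]
    · rw [mul_zero]
      symm
      refine Finset.sum_eq_zero fun v _ => ?_
      split_ifs with h4 h5
      · exfalso
        apply h
        exact ⟨((span_eq_iff n a _ h5.1 L).1 h4).1, h5.2⟩
      · rfl
      · rfl
  simp only [step]
  rw [Finset.sum_comm]
  refine Finset.sum_congr rfl fun v _ => ?_
  rw [Finset.sum_ite_eq]
  simp

open Classical in
lemma pair_count (n a m k : ℕ) (𝓛 𝓡 : Submodule (ZMod 2) (Fin n → ZMod 2) → Prop)
    [Fintype (Submodule (ZMod 2) (Fin n → ZMod 2))] :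
    (Nat.card {p : Submodule (ZMod 2) (Fin n → ZMod 2) ×
          (Fin k → Submodule (ZMod 2) (Fin n → ZMod 2)) //
        (Module.finrank (ZMod 2) p.1 = a ∧
          ∀ i, Module.finrank (ZMod 2) (p.2 i) = m ∧ p.1 ≤ p.2 i) ∧
        (𝓡 p.1 ∧ ∀ i, 𝓛 (p.2 i))} : ℝ) =
    ∑ R : Submodule (ZMod 2) (Fin n → ZMod 2),
      (if Module.finrank (ZMod 2) R = a ∧ 𝓡 R then (upCount n m 𝓛 R : ℝ) ^ k else 0) := by
  rw [Nat.card_eq_fintype_card, Fintype.card_subtype, ← Finset.sum_boole,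
    Fintype.sum_prod_type]
  refine Finset.sum_congr rfl fun R _ => ?_
  split_ifs with h
  · have e : ((upCount n m 𝓛 R : ℝ)) ^ k = (Nat.card (Fin k →
        {L : Submodule (ZMod 2) (Fin n → ZMod 2) //
          (Module.finrank (ZMod 2) L = m ∧ R ≤ L) ∧ 𝓛 L}) : ℝ) := by
      rw [Nat.card_fun]
      simp [upCount]
    rw [e, Finset.sum_boole, ← Fintype.card_subtype, ← Nat.card_eq_fintype_card]
    congr 1
    refine Nat.card_congr ?_
    refine (Equiv.subtypeEquivRight ?_).trans (Equiv.subtypePiEquivPi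
      (p := fun _ (L : Submodule (ZMod 2) (Fin n → ZMod 2)) => (Module.finrank (ZMod 2) L = m ∧ R ≤ L) ∧ 𝓛 L))
    intro x
    simp only [h, true_and, forall_and]
  · refine Finset.sum_eq_zero fun x _ => ?_
    rw [if_neg]
    exact fun h' => h ⟨h'.1.1, h'.2.1⟩

open Classical in
/-- the unnormalized inner product -/
lemma main_count (n a b k : ℕ) (𝓛 𝓡 : Submodule (ZMod 2) (Fin n → ZMod 2) → Prop) :
    ∑ M : Fin a → Fin n → ZMod 2,
      (if LinearIndependent (ZMod 2) M ∧ 𝓡 (Submodule.span (ZMod 2) (Set.range M)) then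
        (∑ v : Fin b → Fin n → ZMod 2,
          (if LinearIndependent (ZMod 2) (Fin.append M v) ∧
            𝓛 (Submodule.span (ZMod 2) (Set.range (Fin.append M v))) then (1:ℝ) else 0)) ^ k
        else 0) =
    ((∏ i ∈ Finset.range a, ((2:ℝ) ^ a - 2 ^ i)) *
      (∏ i ∈ Finset.range b, ((2:ℝ) ^ (a + b) - 2 ^ (a + i))) ^ k) *
    (Nat.card {p : Submodule (ZMod 2) (Fin n → ZMod 2) ×
          (Fin k → Submodule (ZMod 2) (Fin n → ZMod 2)) //
        (Module.finrank (ZMod 2) p.1 = a ∧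
          ∀ i, Module.finrank (ZMod 2) (p.2 i) = a + b ∧ p.1 ≤ p.2 i) ∧
        (𝓡 p.1 ∧ ∀ i, 𝓛 (p.2 i))} : ℝ) := by
  haveI : Fintype (Submodule (ZMod 2) (Fin n → ZMod 2)) := Fintype.ofFinite _
  have h := outer_count n a 𝓡 (fun R =>
    ((∏ i ∈ Finset.range b, ((2:ℝ) ^ (a + b) - 2 ^ (a + i))) * upCount n (a + b) 𝓛 R) ^ k)
  rw [pair_count, mul_assoc, Finset.mul_sum]
  simp only [mul_ite, mul_zero, ← mul_pow]
  rw [← h]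
  refine Finset.sum_congr rfl fun M _ => ?_
  split_ifs with hM
  · rw [inner_count n a b 𝓛 M hM.1]
  · rfl

open Classical in
lemma total_count (n a b k : ℕ) :
    ∑ M : Fin a → Fin n → ZMod 2,
      (if LinearIndependent (ZMod 2) M then
        (∑ v : Fin b → Fin n → ZMod 2,
          (if LinearIndependent (ZMod 2) (Fin.append M v) then (1:ℝ) else 0)) ^ k
        else 0) =
    (∏ i ∈ Finset.range a, ((2:ℝ) ^ n - 2 ^ i)) *
      (∏ i ∈ Finset.range b, ((2:ℝ) ^ n - 2 ^ (a + i))) ^ k := by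
  have htop : Module.finrank (ZMod 2) (⊤ : Submodule (ZMod 2) (Fin n → ZMod 2)) = n := by
    simp
  rw [← base_count n a n ⊤ htop, Finset.sum_mul]
  refine Finset.sum_congr rfl fun M _ => ?_
  by_cases hM : LinearIndependent (ZMod 2) M
  · rw [← ext_count n a n ⊤ htop M hM (fun _ => Submodule.mem_top) b]
    simp [hM]
  · simp [hM]

lemma prod_lower (n s b m : ℕ) (hsb : s + b ≤ m) (hmn : m ≤ n) :
    ((2:ℝ) ^ n - 2 ^ m) ^ b ≤ ∏ i ∈ Finset.range b, ((2:ℝ) ^ n - 2 ^ (s + i)) := by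
  have h0 : (2:ℝ) ^ m ≤ 2 ^ n := pow_le_pow_right₀ (by norm_num) hmn
  calc ((2:ℝ) ^ n - 2 ^ m) ^ b = ∏ i ∈ Finset.range b, ((2:ℝ) ^ n - 2 ^ m) := by simp
    _ ≤ _ := by
      refine Finset.prod_le_prod (fun i _ => by linarith) fun i hi => ?_
      have : (2:ℝ) ^ (s + i) ≤ 2 ^ m :=
        pow_le_pow_right₀ (by norm_num) (by have := Finset.mem_range.1 hi; omega)
      linarith

lemma total_lower (n a b k : ℕ)
    (hcond : (2 * ((a + b : ℝ) + b * k)) * 2 ^ (a + b) ≤ 2 ^ n) :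
    (2:ℝ) ^ (n * a) * (2 ^ (n * b)) ^ k ≤
    2 * ((∏ i ∈ Finset.range a, ((2:ℝ) ^ n - 2 ^ i)) *
      (∏ i ∈ Finset.range b, ((2:ℝ) ^ n - 2 ^ (a + i))) ^ k) := by
  rcases Nat.eq_zero_or_pos (a + b) with h | h
  · obtain ⟨rfl, rfl⟩ : a = 0 ∧ b = 0 := by omega
    simp
  · have hab : (1:ℝ) ≤ a + b := by exact_mod_cast h
    have hbk : (0:ℝ) ≤ b * k := by positivity
    have hp : (0:ℝ) < 2 ^ (a + b) := by positivity
    have hmn : a + b ≤ n := by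
      have : (2:ℝ) ^ (a + b) ≤ 2 ^ n := by nlinarith
      exact (pow_le_pow_iff_right₀ (by norm_num : (1:ℝ) < 2)).1 this
    have h0 : (2:ℝ) ^ (a + b) ≤ 2 ^ n := pow_le_pow_right₀ (by norm_num) hmn
    have h1 := prod_lower n 0 a (a + b) (by omega) hmn
    have h2 := prod_lower n a b (a + b) le_rfl hmn
    simp only [Nat.zero_add] at h1
    have hx : (0:ℝ) ≤ 2 ^ n - 2 ^ (a + b) := by linarith
    have h3 : ((2:ℝ) ^ n - 2 ^ (a + b)) ^ (a + b * k) ≤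
        (∏ i ∈ Finset.range a, ((2:ℝ) ^ n - 2 ^ i)) *
      (∏ i ∈ Finset.range b, ((2:ℝ) ^ n - 2 ^ (a + i))) ^ k := by
      rw [pow_add, pow_mul]
      exact mul_le_mul h1 (pow_le_pow_left₀ (pow_nonneg hx _) h2 k) (by positivity)
        (le_trans (by positivity) h1)
    have hN : (0:ℝ) < 2 ^ n := by positivity
    have hB := one_add_mul_le_pow (a := -((2:ℝ) ^ (a + b) / 2 ^ n)) (by
      have : (2:ℝ) ^ (a + b) / 2 ^ n ≤ 1 := by rw [div_le_one hN]; exact h0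
      linarith) (a + b * k)
    have h4 : ((2:ℝ) ^ n - 2 ^ (a + b)) ^ (a + b * k) =
        (2 ^ n) ^ (a + b * k) * (1 + -((2:ℝ) ^ (a + b) / 2 ^ n)) ^ (a + b * k) := by
      rw [← mul_pow]; congr 1; field_simp; ring
    have h5 : ((a + b * k : ℕ) : ℝ) * (2 ^ (a + b) / 2 ^ n) ≤ 1 / 2 := by
      rw [← mul_div_assoc, div_le_iff₀ hN]
      push_cast
      have : (0:ℝ) ≤ b * 2 ^ (a + b) := by positivity
      nlinarith
    have h6 : (2:ℝ) ^ (n * a) * (2 ^ (n * b)) ^ k = (2 ^ n) ^ (a + b * k) := by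
      rw [pow_add, pow_mul, pow_mul, pow_mul]
    have h7 : (0:ℝ) < (2 ^ n) ^ (a + b * k) := by positivity
    rw [h6]
    have h8 : (1:ℝ) / 2 ≤ (1 + -((2:ℝ) ^ (a + b) / 2 ^ n)) ^ (a + b * k) := by
      refine le_trans ?_ hB
      linarith
    nlinarith

/-- The inner product expression dominates the subspace event: with F, G the
matrix-indicator functions of families 𝓛 ⊆ Grass(n, a+b) and 𝓡 ⊆ Grass(n, a)
(here a = 2(1−δ)ℓ and a + b = 2ℓ), and T the column-extension averaging operator,
Pr[R ∈ 𝓡 and L_1,…,L_k ∈ 𝓛] ≤ 2⟨(TF)^k, G⟩, provided 2(2ℓ + 2δkℓ)·2^{2ℓ} ≤ 2^n. -/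
theorem stmt_14 (n a b k : ℕ)
    (𝓛 𝓡 : Submodule (ZMod 2) (Fin n → ZMod 2) → Prop)
    (hcond : (2 * ((a + b : ℝ) + b * k)) * 2 ^ (a + b) ≤ 2 ^ n)
    (F : (Fin (a + b) → Fin n → ZMod 2) → ℝ)
    (hF : F = Set.indicator {M' | LinearIndependent (ZMod 2) M' ∧
      𝓛 (Submodule.span (ZMod 2) (Set.range M'))} (fun _ => (1 : ℝ)))
    (G : (Fin a → Fin n → ZMod 2) → ℝ)
    (hG : G = Set.indicator {M | LinearIndependent (ZMod 2) M ∧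
      𝓡 (Submodule.span (ZMod 2) (Set.range M))} (fun _ => (1 : ℝ))) :
    (Nat.card {p : Submodule (ZMod 2) (Fin n → ZMod 2) ×
          (Fin k → Submodule (ZMod 2) (Fin n → ZMod 2)) //
        (Module.finrank (ZMod 2) p.1 = a ∧
          ∀ i, Module.finrank (ZMod 2) (p.2 i) = a + b ∧ p.1 ≤ p.2 i) ∧
        (𝓡 p.1 ∧ ∀ i, 𝓛 (p.2 i))} : ℝ) /
      (Nat.card {p : Submodule (ZMod 2) (Fin n → ZMod 2) ×
          (Fin k → Submodule (ZMod 2) (Fin n → ZMod 2)) //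
        Module.finrank (ZMod 2) p.1 = a ∧
          ∀ i, Module.finrank (ZMod 2) (p.2 i) = a + b ∧ p.1 ≤ p.2 i} : ℝ)
      ≤ 2 * ((∑ M : Fin a → Fin n → ZMod 2,
          (((∑ v : Fin b → Fin n → ZMod 2, F (Fin.append M v)) / 2 ^ (n * b)) ^ k) * G M) /
            2 ^ (n * a)) := by
  classical
  have h1 := main_count n a b k 𝓛 𝓡
  have h2 := main_count n a b k (fun _ => True) (fun _ => True)
  simp only [and_true, implies_true] at h2
  rw [total_count] at h2
  have h3 := total_lower n a b k hcond
  rw [h2] at h3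
  have hS : (∑ M : Fin a → Fin n → ZMod 2,
      (((∑ v : Fin b → Fin n → ZMod 2, F (Fin.append M v)) / 2 ^ (n * b)) ^ k) * G M) /
        2 ^ (n * a) = (∑ M : Fin a → Fin n → ZMod 2,
      (if LinearIndependent (ZMod 2) M ∧ 𝓡 (Submodule.span (ZMod 2) (Set.range M)) then
        (∑ v : Fin b → Fin n → ZMod 2,
          (if LinearIndependent (ZMod 2) (Fin.append M v) ∧
            𝓛 (Submodule.span (ZMod 2) (Set.range (Fin.append M v))) then (1:ℝ) else 0)) ^ k
        else 0)) / (2 ^ (n * a) * (2 ^ (n * b)) ^ k) := by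
    rw [mul_comm ((2:ℝ) ^ (n * a)), ← div_div, Finset.sum_div _ _ ((2 ^ (n * b)) ^ k : ℝ)]
    congr 1
    refine Finset.sum_congr rfl fun M _ => ?_
    subst hF hG
    simp only [Set.indicator_apply, Set.mem_setOf_eq, div_pow]
    split_ifs <;> simp
  rw [hS, h1]
  generalize ((∏ i ∈ Finset.range a, ((2:ℝ) ^ a - 2 ^ i)) *
      (∏ i ∈ Finset.range b, ((2:ℝ) ^ (a + b) - 2 ^ (a + i))) ^ k) = c at *
  set A : ℝ := (Nat.card {p : Submodule (ZMod 2) (Fin n → ZMod 2) ×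
          (Fin k → Submodule (ZMod 2) (Fin n → ZMod 2)) //
        (Module.finrank (ZMod 2) p.1 = a ∧
          ∀ i, Module.finrank (ZMod 2) (p.2 i) = a + b ∧ p.1 ≤ p.2 i) ∧
        (𝓡 p.1 ∧ ∀ i, 𝓛 (p.2 i))} : ℝ) with hA
  set D : ℝ := (Nat.card {p : Submodule (ZMod 2) (Fin n → ZMod 2) ×
          (Fin k → Submodule (ZMod 2) (Fin n → ZMod 2)) //
        Module.finrank (ZMod 2) p.1 = a ∧
          ∀ i, Module.finrank (ZMod 2) (p.2 i) = a + b ∧ p.1 ≤ p.2 i} : ℝ) with hD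
  have hA0 : 0 ≤ A := Nat.cast_nonneg _
  have hD0 : 0 ≤ D := Nat.cast_nonneg _
  have hQ : (0:ℝ) < 2 ^ (n * a) * (2 ^ (n * b)) ^ k := by positivity
  generalize (2:ℝ) ^ (n * a) * (2 ^ (n * b)) ^ k = Q at *
  have hDpos : 0 < D := by
    rcases hD0.lt_or_eq with h | h
    · exact h
    · rw [← h] at h3; linarith
  rw [div_le_iff₀ hDpos, mul_div_assoc', div_mul_eq_mul_div, le_div_iff₀ hQ]
  nlinarith
end
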